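/- Let g: ℝ^m × ℝ → ℝ with (x,y) ↦ g(x,y) twice continuously differentiable in x and differentiable in y at (q, y₀) with ∂g/∂y(q,y₀) = f(q,y₀), and K a second-order kernel as above. For y_n → y₀, the bias satisfies (1/Δ_n)∫ ∏_j K((q_j − x_j)/δ_{n,j}) g(x, y_n) dx − g(q, y₀) = (κ₂/2) Σ_j δ_{n,j}² ∂²g/∂x_j²(q, y₀) + f(q,y₀)(y_n − y₀) + Σ_j o(δ_{n,j}²) + o(y_n − y₀) as n → ∞. -/

import Mathlib

open MeasureTheory Filter Asymptotics

lemma aux_taylor2 {E : Type*} [NormedAddCommGroup E] [NormedSpace ℝ E] (F : E → ℝ) (p : E)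
    (hF : ContDiffAt ℝ 2 F p) (ε : ℝ) (hε : 0 < ε) :
    ∃ η > 0, ∀ v : E, ‖v‖ < η →
      |F (p + v) - F p - fderiv ℝ F p v - 1 / 2 * fderiv ℝ (fderiv ℝ F) p v v| ≤ ε * ‖v‖ ^ 2 := by
  have hsymm : IsSymmSndFDerivAt ℝ F p := hF.isSymmSndFDerivAt (by simp)
  have hF1 : ContDiffAt ℝ 1 (fderiv ℝ F) p := hF.fderiv_right (by norm_num)
  have hd2 : HasFDerivAt (fderiv ℝ F) (fderiv ℝ (fderiv ℝ F) p) p :=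
    (hF1.differentiableAt (by norm_num)).hasFDerivAt
  have hd1 : ∀ᶠ x in nhds p, DifferentiableAt ℝ F x := by
    have := hF.eventually (by simp)
    filter_upwards [this] with x hx using hx.differentiableAt (by norm_num)
  have hlo := (hasFDerivAt_iff_isLittleO_nhds_zero.1 hd2).def hε
  have hd1' : ∀ᶠ v in nhds (0 : E), DifferentiableAt ℝ F (p + v) := by
    have : Tendsto (fun v : E => p + v) (nhds 0) (nhds p) := by
      have : Continuous (fun v : E => p + v) := by fun_prop
      simpa using this.tendsto 0
    exact this.eventually hd1
  obtain ⟨η, hη, hball⟩ := Metric.eventually_nhds_iff_ball.1 (hlo.and hd1')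
  refine ⟨η, hη, fun v hv => ?_⟩
  set B := fderiv ℝ (fderiv ℝ F) p with hB
  set φ : E → ℝ := fun w => F (p + w) - fderiv ℝ F p w - 1 / 2 * B w w with hφ
  have hder : ∀ w ∈ Metric.closedBall (0 : E) ‖v‖,
      HasFDerivWithinAt φ (fderiv ℝ F (p + w) - fderiv ℝ F p - B w)
        (Metric.closedBall (0 : E) ‖v‖) w := by
    intro w hw
    have hw' : w ∈ Metric.ball (0 : E) η := by
      simp at hw ⊢; linarith
    apply HasFDerivAt.hasFDerivWithinAt
    have h1 : HasFDerivAt (fun w => F (p + w)) (fderiv ℝ F (p + w)) w := by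
      have := (hball w hw').2.hasFDerivAt
      exact (hasFDerivAt_comp_add_left (f := F) p).2 this
    have h2 : HasFDerivAt (fun w => fderiv ℝ F p w) (fderiv ℝ F p) w :=
      (fderiv ℝ F p).hasFDerivAt
    have h3 := (B.hasFDerivAt (x := w)).clm_apply (hasFDerivAt_id w)
    convert! (h1.sub h2).sub (h3.const_mul (1 / 2)) using 1
    ext u
    simp
    have := hsymm.eq u w
    rw [← hB] at this
    rw [this]; ring
  have hbd : ∀ w ∈ Metric.closedBall (0 : E) ‖v‖,
      ‖fderiv ℝ F (p + w) - fderiv ℝ F p - B w‖ ≤ ε * ‖v‖ := by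
    intro w hw
    have hw2 : ‖w‖ ≤ ‖v‖ := by simpa using hw
    have hw' : w ∈ Metric.ball (0 : E) η := by
      simp; linarith
    exact (hball w hw').1.trans (by gcongr)
  have := (convex_closedBall (0 : E) ‖v‖).norm_image_sub_le_of_norm_hasFDerivWithin_le hder hbd
    (x := 0) (y := v) (by simp) (by simp)
  simp only [hφ, Real.norm_eq_abs] at this
  simp only [add_zero, map_zero, mul_zero, sub_zero] at this
  refine le_trans (le_of_eq ?_) (this.trans (le_of_eq (by ring)))
  congr 1; ring

lemma aux_arith (G g0 f a Q u w V σ S ε : ℝ) (hε : 0 ≤ ε)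
    (hT : |G - g0 - (f + a) - 1 / 2 * (Q + (2 * u + w))| ≤ ε / 2 * V)
    (hu : |u| ≤ ε / 4 * σ) (hw : |w| ≤ ε / 4 * σ) (hV : V ≤ S + σ) (hS : 0 ≤ S) :
    |G - (g0 + f + a + 1 / 2 * Q)| ≤ ε * (S + σ) := by
  have h1 : ε / 2 * V ≤ ε / 2 * (S + σ) := by gcongr
  have h2 : 0 ≤ ε * S := mul_nonneg hε hS
  have h3 : 0 ≤ ε / 4 * σ := (abs_nonneg u).trans hu
  rw [abs_le] at hT hu hw ⊢
  constructor <;> linarith [hT.1, hT.2, hu.1, hu.2, hw.1, hw.2]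

set_option maxHeartbeats 2000000 in
lemma aux_expand {m : ℕ} (g : (Fin m → ℝ) → ℝ → ℝ) (q : Fin m → ℝ) (y₀ fqy : ℝ)
    (hg : ContDiffAt ℝ 2 (fun p : (Fin m → ℝ) × ℝ => g p.1 p.2) (q, y₀))
    (hdy : HasDerivAt (fun y => g q y) fqy y₀) :
    ∃ (A : Fin m → ℝ) (H : Fin m → Fin m → ℝ),
      (∀ j, H j j = deriv (deriv (fun t => g (Function.update q j t) y₀)) (q j)) ∧
      ∀ ε > 0, ∃ η > 0, ∀ (x : Fin m → ℝ) (y : ℝ), (∀ j, |x j - q j| < η) → |y - y₀| < η →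
        |g x y - (g q y₀ + fqy * (y - y₀) + ∑ j, A j * (x j - q j)
          + 1 / 2 * ∑ i, ∑ j, H i j * ((x i - q i) * (x j - q j)))|
          ≤ ε * ((∑ j, (x j - q j) ^ 2) + |y - y₀|) := by
  set F : (Fin m → ℝ) × ℝ → ℝ := fun p => g p.1 p.2 with hFdef
  set L := fderiv ℝ F (q, y₀) with hL
  set B := fderiv ℝ (fderiv ℝ F) (q, y₀) with hB
  let e : Fin m → (Fin m → ℝ) × ℝ := fun j => (Pi.single j 1, 0)
  have hF1 : ContDiffAt ℝ 1 (fderiv ℝ F) (q, y₀) := hg.fderiv_right (by norm_num)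
  have hd2 : HasFDerivAt (fderiv ℝ F) B (q, y₀) :=
    (hF1.differentiableAt (by norm_num)).hasFDerivAt
  have hd1 : ∀ᶠ x in nhds (q, y₀), DifferentiableAt ℝ F x := by
    have := hg.eventually (by simp)
    filter_upwards [this] with x hx using hx.differentiableAt (by norm_num)
  have hsymm : IsSymmSndFDerivAt ℝ F (q, y₀) := hg.isSymmSndFDerivAt (by simp)
  have hfq : L (0, 1) = fqy := by
    have hc : HasDerivAt (fun y : ℝ => (q, y)) ((0 : Fin m → ℝ), (1 : ℝ)) y₀ :=
      (hasDerivAt_const y₀ q).prodMk (hasDerivAt_id y₀)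
    have hLd : HasFDerivAt F L (q, y₀) := hd1.self_of_nhds.hasFDerivAt
    have := hLd.comp_hasDerivAt y₀ hc
    exact this.unique hdy
  refine ⟨fun j => L (e j), fun i j => B (e i) (e j), ?_, ?_⟩
  · intro j
    have hc : ∀ t, HasDerivAt (fun t : ℝ => (Function.update q j t, y₀)) (e j) t := fun t =>
      (hasDerivAt_update q j t).prodMk (hasDerivAt_const t y₀)
    have hcq : (fun t : ℝ => (Function.update q j t, y₀)) (q j) = (q, y₀) := by simp
    have hev : ∀ᶠ t in nhds (q j), deriv (fun t => g (Function.update q j t) y₀) t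
        = fderiv ℝ F (Function.update q j t, y₀) (e j) := by
      have ht := (hc (q j)).continuousAt.tendsto
      simp only [Function.update_eq_self] at ht
      filter_upwards [ht.eventually hd1] with t ht
      exact (ht.hasFDerivAt.comp_hasDerivAt t (hc t)).deriv
    rw [Filter.EventuallyEq.deriv_eq hev]
    have hd2' : HasFDerivAt (fderiv ℝ F) B (Function.update q j (q j), y₀) := by
      simpa using hd2
    have h := (hd2'.comp_hasDerivAt (q j) (hc (q j))).clm_apply (hasDerivAt_const (q j) (e j))
    have := h.deriv
    simp at this
    exact this.symm
  · intro ε hε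
    obtain ⟨η, hη, hT⟩ := aux_taylor2 F (q, y₀) hg (ε / 2) (by positivity)
    refine ⟨min (min η 1) (ε / 4 / (‖B‖ + 1)), by positivity, fun x y hx hy => ?_⟩
    set ρ := min (min η 1) (ε / 4 / (‖B‖ + 1)) with hρ
    have hρ0 : 0 < ρ := by positivity
    have hρη : ρ ≤ η := (min_le_left _ _).trans (min_le_left _ _)
    have hρ1 : ρ ≤ 1 := (min_le_left _ _).trans (min_le_right _ _)
    have hρB : ‖B‖ * ρ ≤ ε / 4 := by
      have h1 : ρ ≤ ε / 4 / (‖B‖ + 1) := min_le_right _ _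
      rw [le_div_iff₀ (by positivity)] at h1
      nlinarith
    set h := x - q with hh
    set s := y - y₀ with hs
    have hnorm : ‖h‖ < ρ := (pi_norm_lt_iff hρ0).2 (fun j => hx j)
    have hsum : ‖h‖ ^ 2 ≤ ∑ j, (x j - q j) ^ 2 := by
      have hS : 0 ≤ ∑ j, (x j - q j) ^ 2 := Finset.sum_nonneg (fun j _ => sq_nonneg _)
      have : ‖h‖ ≤ Real.sqrt (∑ j, (x j - q j) ^ 2) := by
        refine (pi_norm_le_iff_of_nonneg (Real.sqrt_nonneg _)).2 (fun j => ?_)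
        apply Real.le_sqrt_of_sq_le
        rw [Real.norm_eq_abs, sq_abs]
        exact Finset.single_le_sum (f := fun j => (x j - q j) ^ 2)
          (fun j _ => sq_nonneg _) (Finset.mem_univ j)
      calc ‖h‖ ^ 2 ≤ (Real.sqrt (∑ j, (x j - q j) ^ 2)) ^ 2 := by gcongr
        _ = _ := Real.sq_sqrt hS
    have hdec : ((h, s) : (Fin m → ℝ) × ℝ) = ∑ j, h j • e j + s • (0, 1) := by
      ext j
      · simp [e, Prod.fst_sum, Finset.sum_apply, Pi.single_apply]
      · simp [e, Prod.snd_sum]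
    have hh0 : ((h, 0) : (Fin m → ℝ) × ℝ) = ∑ j, h j • e j := by
      ext j
      · simp [e, Prod.fst_sum, Finset.sum_apply, Pi.single_apply]
      · simp [e, Prod.snd_sum]
    have hsplit : ((h, s) : (Fin m → ℝ) × ℝ) = (h, 0) + (0, s) := by simp
    have hvn : ‖((h, s) : (Fin m → ℝ) × ℝ)‖ < ρ := by
      rw [Prod.norm_def]; exact max_lt hnorm hy
    have hvn2 : ‖((h, s) : (Fin m → ℝ) × ℝ)‖ ^ 2 ≤ ‖h‖ ^ 2 + |s| := by
      rw [Prod.norm_def]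
      have hs1 : |s| ≤ 1 := hy.le.trans hρ1
      rcases max_choice ‖h‖ ‖s‖ with h' | h' <;> rw [h'] <;> try simp only [Real.norm_eq_abs]
      · linarith [abs_nonneg s]
      · nlinarith [abs_nonneg s, sq_nonneg ‖h‖]
    have hTv := hT (h, s) (hvn.trans_le hρη)
    have hFv : F ((q, y₀) + (h, s)) = g x y := by
      simp [hFdef, hh, hs]
    rw [hFv] at hTv
    have hLv : L (h, s) = fqy * s + ∑ j, L (e j) * h j := by
      rw [hdec, map_add, map_sum, map_smul, hfq]
      simp [mul_comm, add_comm]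
    have hBh : B (h, 0) (h, 0) = ∑ i, ∑ j, B (e i) (e j) * (h i * h j) := by
      rw [hh0]
      simp only [map_sum, map_smul, sum_apply, smul_apply,
        smul_eq_mul, Finset.mul_sum]
      rw [Finset.sum_comm]
      refine Finset.sum_congr rfl fun i _ => Finset.sum_congr rfl fun j _ => ?_
      ring
    have hBv : B (h, s) (h, s) = B (h, 0) (h, 0) + (2 * B (h, 0) (0, s) + B (0, s) (0, s)) := by
      have h2 : B (0, s) (h, 0) = B (h, 0) (0, s) := hsymm.eq _ _
      rw [hsplit]
      simp only [map_add, add_apply]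
      rw [h2]; ring
    have hb1 : |B (h, 0) (0, s)| ≤ ‖B‖ * ρ * |s| := by
      have := B.le_opNorm₂ (h, 0) (0, s)
      simp [Prod.norm_def] at this
      exact this.trans (by gcongr)
    have hb2 : |B (0, s) (0, s)| ≤ ‖B‖ * ρ * |s| := by
      have := B.le_opNorm₂ (0, s) (0, s)
      simp [Prod.norm_def] at this
      exact this.trans (by gcongr)
    rw [← hL, ← hB, hLv, hBv, hBh] at hTv
    have hS : 0 ≤ ∑ j, (x j - q j) ^ 2 := Finset.sum_nonneg (fun j _ => sq_nonneg _)
    exact aux_arith _ _ _ _ _ _ _ _ _ _ ε hε.le hTv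
      (hb1.trans (by gcongr)) (hb2.trans (by gcongr)) (hvn2.trans (by gcongr)) hS

lemma aux_scale (φ : ℝ → ℝ) (a d : ℝ) (hd : 0 < d) :
    ∫ x, φ ((a - x) / d) = d * ∫ t, φ t := by
  have h1 := integral_sub_left_eq_self (fun u => φ (u / d)) (volume : Measure ℝ) a
  have h2 := Measure.integral_comp_div φ d
  rw [h1, h2, abs_of_pos hd, smul_eq_mul]

lemma aux_scale_int (φ : ℝ → ℝ) (hφ : Integrable φ) (a d : ℝ) (hd : 0 < d) :
    Integrable (fun x => φ ((a - x) / d)) :=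
  (hφ.comp_div hd.ne').comp_sub_left a

section
variable {m : ℕ} (k : Fin m → ℝ → ℝ) (q c : Fin m → ℝ)

lemma aux_m0 (I0 : ∀ i, Integrable (k i)) (h0 : ∀ i, ∫ t, k i t = 1) :
    Integrable (fun x : Fin m → ℝ => ∏ i, k i (x i)) ∧
      ∫ x : Fin m → ℝ, ∏ i, k i (x i) = 1 := by
  refine ⟨Integrable.fintype_prod I0, ?_⟩
  rw [integral_fintype_prod_volume_eq_prod]
  simp [h0]

lemma aux_m1 (I0 : ∀ i, Integrable (k i)) (h0 : ∀ i, ∫ t, k i t = 1)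
    (I1 : ∀ i, Integrable (fun t => k i t * (t - q i))) (h1 : ∀ i, ∫ t, k i t * (t - q i) = 0)
    (a : Fin m) :
    Integrable (fun x : Fin m → ℝ => (∏ i, k i (x i)) * (x a - q a)) ∧
      ∫ x : Fin m → ℝ, (∏ i, k i (x i)) * (x a - q a) = 0 := by
  let ψ : Fin m → ℝ → ℝ := fun i t => k i t * (if i = a then t - q i else 1)
  have key : (fun x : Fin m → ℝ => (∏ i, k i (x i)) * (x a - q a)) =
      fun x => ∏ i, ψ i (x i) := by
    ext x
    simp only [ψ, Finset.prod_mul_distrib, Finset.prod_ite_eq', Finset.mem_univ, if_true]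
  rw [key]
  constructor
  · refine Integrable.fintype_prod (f := ψ) (μ := fun _ => volume) ?_
    intro i
    by_cases hi : i = a
    · simpa [ψ, hi] using I1 a
    · simpa [ψ, hi] using I0 i
  · rw [integral_fintype_prod_volume_eq_prod ψ]
    apply Finset.prod_eq_zero (Finset.mem_univ a)
    simpa [ψ] using h1 a

lemma aux_m2 (I0 : ∀ i, Integrable (k i)) (h0 : ∀ i, ∫ t, k i t = 1)
    (I1 : ∀ i, Integrable (fun t => k i t * (t - q i))) (h1 : ∀ i, ∫ t, k i t * (t - q i) = 0)
    (I2 : ∀ i, Integrable (fun t => k i t * (t - q i) ^ 2))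
    (h2 : ∀ i, ∫ t, k i t * (t - q i) ^ 2 = c i)
    (a b : Fin m) :
    Integrable (fun x : Fin m → ℝ => (∏ i, k i (x i)) * ((x a - q a) * (x b - q b))) ∧
      ∫ x : Fin m → ℝ, (∏ i, k i (x i)) * ((x a - q a) * (x b - q b))
        = if a = b then c a else 0 := by
  let ψ : Fin m → ℝ → ℝ := fun i t => k i t * ((if i = a then t - q i else 1) * (if i = b then t - q i else 1))
  have key : (fun x : Fin m → ℝ => (∏ i, k i (x i)) * ((x a - q a) * (x b - q b))) =
      fun x => ∏ i, ψ i (x i) := by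
    ext x
    simp only [ψ, Finset.prod_mul_distrib, Finset.prod_ite_eq', Finset.mem_univ, if_true]
  rw [key]
  constructor
  · refine Integrable.fintype_prod (f := ψ) (μ := fun _ => volume) ?_
    intro i
    by_cases hi : i = a <;> by_cases hj : i = b
    · simpa [ψ, ← hi, ← hj, sq] using I2 i
    · simpa [ψ, ← hi, hj] using I1 i
    · simpa [ψ, hi, ← hj] using I1 i
    · simpa [ψ, hi, hj] using I0 i
  · rw [integral_fintype_prod_volume_eq_prod ψ]
    by_cases hab : a = b
    · subst hab
      rw [if_pos rfl, Finset.prod_eq_single a]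
      · simpa [ψ, sq] using h2 a
      · intro i _ hi
        simpa [ψ, hi] using h0 i
      · simp
    · rw [if_neg hab]
      apply Finset.prod_eq_zero (Finset.mem_univ a)
      simpa [ψ, hab] using h1 a

end

/-- Kernel-weighted quadratic approximation. -/
lemma aux_bound {m : ℕ} (k : Fin m → ℝ → ℝ) (q c : Fin m → ℝ)
    (I0 : ∀ i, Integrable (k i)) (h0 : ∀ i, ∫ t, k i t = 1)
    (I1 : ∀ i, Integrable (fun t => k i t * (t - q i))) (h1 : ∀ i, ∫ t, k i t * (t - q i) = 0)
    (I2 : ∀ i, Integrable (fun t => k i t * (t - q i) ^ 2))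
    (h2 : ∀ i, ∫ t, k i t * (t - q i) ^ 2 = c i)
    (hpos : ∀ i t, 0 ≤ k i t)
    (G : (Fin m → ℝ) → ℝ) (hG : Integrable (fun x : Fin m → ℝ => (∏ i, k i (x i)) * G x))
    (C : ℝ) (A : Fin m → ℝ) (H : Fin m → Fin m → ℝ) (ε σ : ℝ)
    (hb : ∀ x : Fin m → ℝ, (∀ i, k i (x i) ≠ 0) →
      |G x - (C + ∑ j, A j * (x j - q j)
          + 1 / 2 * ∑ i, ∑ j, H i j * ((x i - q i) * (x j - q j)))|
          ≤ ε * ((∑ j, (x j - q j) ^ 2) + σ)) :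
    |(∫ x : Fin m → ℝ, (∏ i, k i (x i)) * G x) - (C + 1 / 2 * ∑ j, H j j * c j)|
      ≤ ε * (∑ j, c j + σ) := by
  set W : (Fin m → ℝ) → ℝ := fun x => ∏ i, k i (x i) with hW
  have m0 := aux_m0 k I0 h0
  have m1 := aux_m1 k q I0 h0 I1 h1
  have m2 := aux_m2 k q c I0 h0 I1 h1 I2 h2
  have hW0 : ∀ x, 0 ≤ W x := fun x => Finset.prod_nonneg (fun i _ => hpos i _)
  set P : (Fin m → ℝ) → ℝ := fun x => C + ∑ j, A j * (x j - q j)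
          + 1 / 2 * ∑ i, ∑ j, H i j * ((x i - q i) * (x j - q j)) with hP
  have eP : (fun x => W x * P x) = fun x => W x * C + ∑ j, A j * (W x * (x j - q j))
      + 1 / 2 * ∑ i, ∑ j, H i j * (W x * ((x i - q i) * (x j - q j))) := by
    ext x
    simp only [hP, mul_add, Finset.mul_sum]
    congr 1
    · congr 1
      exact Finset.sum_congr rfl fun j _ => by ring
    · exact Finset.sum_congr rfl fun i _ => Finset.sum_congr rfl fun j _ => by ring
  have J1 : Integrable (fun x => W x * C) := m0.1.mul_const C
  have J2 : Integrable (fun x => ∑ j, A j * (W x * (x j - q j))) :=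
    integrable_finsetSum _ fun j _ => (m1 j).1.const_mul _
  have J3 : ∀ i, Integrable (fun x => ∑ j, H i j * (W x * ((x i - q i) * (x j - q j)))) :=
    fun i => integrable_finsetSum _ fun j _ => (m2 i j).1.const_mul _
  have J4 : Integrable (fun x => 1 / 2 * ∑ i, ∑ j, H i j * (W x * ((x i - q i) * (x j - q j)))) :=
    (integrable_finsetSum _ fun i _ => J3 i).const_mul _
  have iP : Integrable (fun x => W x * P x) := by
    rw [eP]; exact (J1.add J2).add J4
  have vP : ∫ x, W x * P x = C + 1 / 2 * ∑ j, H j j * c j := by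
    rw [eP, integral_add (f := fun x => W x * C + ∑ j, A j * (W x * (x j - q j))) (J1.add J2) J4, integral_add J1 J2, integral_mul_const, m0.2,
      integral_finsetSum _ (fun j _ => (m1 j).1.const_mul _), integral_const_mul,
      integral_finsetSum _ (fun i _ => J3 i)]
    have e1 : ∀ j, ∫ x : Fin m → ℝ, A j * ((∏ i, k i (x i)) * (x j - q j)) = 0 := fun j => by
      rw [integral_const_mul, (m1 j).2, mul_zero]
    have e2 : ∀ i, ∫ x, ∑ j, H i j * (W x * ((x i - q i) * (x j - q j))) = H i i * c i := fun i => by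
      rw [integral_finsetSum _ (fun j _ => (m2 i j).1.const_mul _)]
      simp only [integral_const_mul]
      simp only [hW, (m2 i _).2]
      simp
    simp [e1, e2]
  have eQ : (fun x => W x * (ε * ((∑ j, (x j - q j) ^ 2) + σ))) = fun x =>
      ε * (∑ j, W x * ((x j - q j) * (x j - q j)) + W x * σ) := by
    ext x
    rw [← Finset.mul_sum]
    simp only [sq]
    ring
  have K1 : Integrable (fun x => ∑ j, W x * ((x j - q j) * (x j - q j))) :=
    integrable_finsetSum _ fun j _ => (m2 j j).1
  have K2 : Integrable (fun x => W x * σ) := m0.1.mul_const σ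
  have iQ : Integrable (fun x => W x * (ε * ((∑ j, (x j - q j) ^ 2) + σ))) := by
    rw [eQ]; exact (K1.add K2).const_mul _
  have vQ : ∫ x, W x * (ε * ((∑ j, (x j - q j) ^ 2) + σ)) = ε * (∑ j, c j + σ) := by
    rw [eQ, integral_const_mul, integral_add K1 K2,
      integral_finsetSum _ (fun j _ => (m2 j j).1), integral_mul_const, m0.2]
    simp [hW, (m2 _ _).2]
  rw [← vP, ← integral_sub hG iP, ← vQ, ← Real.norm_eq_abs]
  refine norm_integral_le_of_norm_le iQ (Eventually.of_forall fun x => ?_)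
  show ‖W x * G x - W x * P x‖ ≤ _
  rw [← mul_sub, norm_mul, Real.norm_eq_abs, abs_of_nonneg (hW0 x), Real.norm_eq_abs]
  by_cases hx : ∀ i, k i (x i) ≠ 0
  · exact mul_le_mul_of_nonneg_left (hb x hx) (hW0 x)
  · push Not at hx
    obtain ⟨i, hi⟩ := hx
    have : W x = 0 := Finset.prod_eq_zero (Finset.mem_univ i) hi
    simp [this]

/-- Joint bias expansion (Eq. (proofofCLT3)): for `y_n → y₀`, the bias of the kernel
estimator of `g(q,y₀)` evaluated at `y_n` equals
`(κ₂/2) Σⱼ δ_{n,j}² ∂²g/∂xⱼ²(q,y₀) + f(q,y₀)(y_n − y₀)` up to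
`o(Σⱼ δ_{n,j}²) + o(y_n − y₀)`. -/
theorem stmt10 {m : ℕ} (g : (Fin m → ℝ) → ℝ → ℝ) (q : Fin m → ℝ) (y₀ fqy : ℝ)
    (hg : ContDiffAt ℝ 2 (fun p : (Fin m → ℝ) × ℝ => g p.1 p.2) (q, y₀))
    (hdy : HasDerivAt (fun y => g q y) fqy y₀)
    (hgint : ∀ y, Integrable (fun x : Fin m → ℝ => g x y))
    (K : ℝ → ℝ)
    (hKbdd : ∃ C, ∀ t, |K t| ≤ C) (hKsymm : ∀ t, K (-t) = K t)
    (hKsupp : HasCompactSupport K) (hKnonneg : ∀ t, 0 ≤ K t)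
    (hKone : (∫ t, K t) = 1)
    (hKodd : (∫ t, t * K t) = 0)
    (hKsq : Integrable (fun t => t ^ 2 * K t))
    (δ : ℕ → Fin m → ℝ) (hδpos : ∀ n j, 0 < δ n j)
    (hδ0 : ∀ j, Tendsto (fun n => δ n j) atTop (nhds 0))
    (yseq : ℕ → ℝ) (hy : Tendsto yseq atTop (nhds y₀)) :
    (fun n : ℕ =>
        ((1 / ∏ j, δ n j) *
            (∫ x : Fin m → ℝ, (∏ j, K ((q j - x j) / δ n j)) * g x (yseq n))
          - g q y₀)
          - ((∫ t, t ^ 2 * K t) / 2) *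
              ∑ j, (δ n j) ^ 2 *
                deriv (deriv (fun t => g (Function.update q j t) y₀)) (q j)
          - fqy * (yseq n - y₀))
      =o[atTop] (fun n => (∑ j, (δ n j) ^ 2) + |yseq n - y₀|) := by
  obtain ⟨A, H, hH, hexp⟩ := aux_expand g q y₀ fqy hg hdy
  simp only [← hH]
  obtain ⟨C, hC⟩ := hKbdd
  have iK : Integrable K := by
    by_contra hcon
    rw [integral_undef hcon] at hKone
    exact zero_ne_one hKone
  have iK1 : Integrable (fun t => t * K t) := by
    refine (iK.add hKsq).mono' (aestronglyMeasurable_id.mul iK.1) (Eventually.of_forall fun t => ?_)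
    simp only [Pi.add_apply, Real.norm_eq_abs, abs_mul, abs_of_nonneg (hKnonneg t)]
    have h1 : |t| ≤ 1 + t ^ 2 := by
      rw [abs_le]; constructor <;> nlinarith [sq_nonneg (t - 1), sq_nonneg (t + 1)]
    nlinarith [mul_le_mul_of_nonneg_right h1 (hKnonneg t)]
  set κ := ∫ t, t ^ 2 * K t with hκ
  have hκ0 : 0 ≤ κ := integral_nonneg fun t => mul_nonneg (sq_nonneg t) (hKnonneg t)
  obtain ⟨R, hR0, hR⟩ : ∃ R > 0, ∀ t, K t ≠ 0 → |t| ≤ R := by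
    obtain ⟨R, hR⟩ := hKsupp.isCompact.isBounded.exists_norm_le
    refine ⟨max R 1, by positivity, fun t ht => ?_⟩
    exact (hR t (subset_tsupport K ht)).trans (le_max_left _ _)
  rw [isLittleO_iff]
  intro c hc
  obtain ⟨η, hη, hE⟩ := hexp (c / (1 + κ)) (by positivity)
  have evδ : ∀ᶠ n in atTop, ∀ j, δ n j < η / R := by
    rw [eventually_all]
    intro j
    exact (hδ0 j).eventually_lt_const (by positivity)
  have evy : ∀ᶠ n in atTop, |yseq n - y₀| < η := by
    have := Metric.tendsto_nhds.1 hy η hη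
    simpa [Real.dist_eq] using this
  filter_upwards [evδ, evy] with n hnδ hny
  have hd := hδpos n
  set d := δ n with hdd
  let k : Fin m → ℝ → ℝ := fun i x => K ((q i - x) / d i) / d i
  have I0 : ∀ i, Integrable (k i) := fun i =>
    (aux_scale_int K iK (q i) (d i) (hd i)).div_const _
  have h0 : ∀ i, ∫ t, k i t = 1 := fun i => by
    have h := aux_scale K (q i) (d i) (hd i)
    simp only [k]
    rw [integral_div, h, hKone, mul_one, div_self (hd i).ne']
  have e1 : ∀ i, (fun t => k i t * (t - q i)) =
      fun t => -(fun u => u * K u) ((q i - t) / d i) := fun i => by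
    ext t
    have := (hd i).ne'
    simp only [k]
    field_simp
    ring
  have I1 : ∀ i, Integrable (fun t => k i t * (t - q i)) := fun i => by
    rw [e1]
    exact (aux_scale_int _ iK1 (q i) (d i) (hd i)).neg
  have h1 : ∀ i, ∫ t, k i t * (t - q i) = 0 := fun i => by
    rw [e1, integral_neg, aux_scale (fun u => u * K u) (q i) (d i) (hd i), hKodd]
    simp
  have e2 : ∀ i, (fun t => k i t * (t - q i) ^ 2) =
      fun t => d i * (fun u => u ^ 2 * K u) ((q i - t) / d i) := fun i => by
    ext t
    have := (hd i).ne'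
    simp only [k]
    field_simp
    ring
  have I2 : ∀ i, Integrable (fun t => k i t * (t - q i) ^ 2) := fun i => by
    rw [e2]
    exact (aux_scale_int _ hKsq (q i) (d i) (hd i)).const_mul _
  have h2 : ∀ i, ∫ t, k i t * (t - q i) ^ 2 = κ * d i ^ 2 := fun i => by
    rw [e2, integral_const_mul, aux_scale (fun u => u ^ 2 * K u) (q i) (d i) (hd i)]
    rw [← hκ]; ring
  have hpos : ∀ i t, 0 ≤ k i t := fun i t => div_nonneg (hKnonneg _) (hd i).le
  have hG : Integrable (fun x : Fin m → ℝ => (∏ i, k i (x i)) * g x (yseq n)) := by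
    refine (hgint (yseq n)).bdd_mul (c := ∏ i, C / d i) (aux_m0 k I0 h0).1.1
      (Eventually.of_forall fun x => ?_)
    rw [Real.norm_eq_abs, Finset.abs_prod]
    refine Finset.prod_le_prod (fun i _ => abs_nonneg _) fun i _ => ?_
    simp only [k, abs_div, abs_of_pos (hd i)]
    have := hd i
    gcongr
    exact hC _
  have hInt : (1 / ∏ j, d j) * (∫ x : Fin m → ℝ, (∏ j, K ((q j - x j) / d j)) * g x (yseq n))
      = ∫ x : Fin m → ℝ, (∏ i, k i (x i)) * g x (yseq n) := by
    rw [← integral_const_mul]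
    congr 1
    ext x
    simp only [k, Finset.prod_div_distrib]
    ring
  have hB := aux_bound k q (fun i => κ * d i ^ 2) I0 h0 I1 h1 I2 h2 hpos
    (fun x => g x (yseq n)) hG (g q y₀ + fqy * (yseq n - y₀)) A H (c / (1 + κ)) |yseq n - y₀| (by
      intro x hx
      refine hE x (yseq n) (fun j => ?_) hny
      have hKj : K ((q j - x j) / d j) ≠ 0 := by
        intro h
        exact hx j (by simp [k, h])
      have h3 := hR _ hKj
      rw [abs_div, abs_of_pos (hd j), div_le_iff₀ (hd j), abs_sub_comm] at h3
      have h4 := hnδ j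
      rw [lt_div_iff₀ hR0] at h4
      linarith)
  rw [hInt]
  have hS : 0 ≤ ∑ j, d j ^ 2 := Finset.sum_nonneg fun j _ => sq_nonneg _
  rw [Real.norm_eq_abs, Real.norm_eq_abs, abs_of_nonneg (add_nonneg hS (abs_nonneg _))]
  have e3 : ∑ j, H j j * (κ * d j ^ 2) = κ * ∑ j, d j ^ 2 * H j j := by
    rw [Finset.mul_sum]
    exact Finset.sum_congr rfl fun j _ => by ring
  rw [e3, ← Finset.mul_sum] at hB
  have e4 : ∀ I a b s : ℝ, I - a - κ / 2 * s - b = I - (a + b + 1 / 2 * (κ * s)) := by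
    intros; ring
  rw [e4]
  refine hB.trans ?_
  rw [div_mul_eq_mul_div, div_le_iff₀ (by positivity), mul_assoc]
  refine mul_le_mul_of_nonneg_left ?_ hc.le
  nlinarith [mul_nonneg hκ0 (abs_nonneg (yseq n - y₀))]
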